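/- Let Ω ⊂ ℝ² be open and convex, let v ∈ ℝ² be a unit vector and 0 < a ≤ 1. Suppose f′ ∈ BV(Ω) satisfies dDf′/d|Df′|(x) ∈ C(v,a) for |Df′|-a.e. x ∈ Ω, and define f(y) := f′(y) + v·y. Then for all x, y ∈ Ω such that (y−x)·z > 0 for every z ∈ C(v,a) \ {0}, the precise representatives satisfy f*(y) − f*(x) ≥ v·(y−x) > 0. -/

import Mathlib

/-!
The density condition says that the distributional derivative of `f'` in a direction `w` of the
dual cone of `C(v,a)` is a nonnegative measure.  Hence mollifications of `f'` are monotone in the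
direction `w` (`mollified_mono`): the derivative of `s ↦ ∫_Ω f'(z) ψ(p + s w - z) dz` equals
`∫ ψ(p + s w - z) ⟪σ z, w⟫ dν(z) ≥ 0`, by the integration-by-parts formula.  Letting the mollifier
concentrate gives one full-measure set of points on which `f'` is pointwise monotone with respect
to the dual cone (`exists_ae_monotone`).

The dual cone contains a neighbourhood of `v`, so comparing with a single good point on either
side shows that `f'` is essentially bounded near each point of `Ω` (`ae_bounded_near`).
Consequently the sets of thresholds defining the precise representatives are nonempty and bounded
below, and no junk value of `sInf` occurs.  Finally, with `w = y - x`, almost everywhere near `x`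
we have `f (p + w) ≥ f p + ⟪v, w⟫`, so translating by `w` maps each threshold `t` at `y` to the
threshold `t - ⟪v, w⟫` at `x`.
-/

open MeasureTheory Filter
open scoped ENNReal RealInnerProductSpace

noncomputable section

/-- The closed cone `C(v,a) = {x ∈ ℝ² : x·v ≥ a|x|}`. -/
def cone (v : EuclideanSpace ℝ (Fin 2)) (a : ℝ) : Set (EuclideanSpace ℝ (Fin 2)) :=
  {x | a * ‖x‖ ≤ ⟪x, v⟫}

/-- `u ∈ BV(Ω)` for an open set `Ω ⊂ ℝ²`, presented through the polar decomposition
`Du = σ |Du|`: `ν` plays the role of the total variation measure `|Du|` (a finite positive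
measure concentrated on `Ω`) and `σ = dDu/d|Du|` is the vector-valued Radon–Nikodym density
of unit length `ν`-a.e.; the defining requirement is the integration-by-parts formula
`∫_Ω u ∂φ/∂y_l dL² = −∫_Ω φ σ_l dν` for all `φ ∈ C_c¹(Ω)`. -/
structure IsBVScalarOn (Ω : Set (EuclideanSpace ℝ (Fin 2)))
    (u : EuclideanSpace ℝ (Fin 2) → ℝ)
    (ν : Measure (EuclideanSpace ℝ (Fin 2)))
    (σ : EuclideanSpace ℝ (Fin 2) → EuclideanSpace ℝ (Fin 2)) : Prop where
  integrable : IntegrableOn u Ω volume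
  finite : ν Set.univ < ⊤
  concentrated : ν Ωᶜ = 0
  meas : Measurable σ
  unit : ∀ᵐ x ∂ν, ‖σ x‖ = 1
  parts : ∀ φ : EuclideanSpace ℝ (Fin 2) → ℝ, ContDiff ℝ 1 φ → HasCompactSupport φ →
    tsupport φ ⊆ Ω → ∀ l : Fin 2,
      ∫ x in Ω, u x * fderiv ℝ φ x (EuclideanSpace.single l (1:ℝ)) ∂volume
        = - ∫ x, φ x * σ x l ∂ν

/-- The precise representative `u*`. -/
def preciseRep (u : EuclideanSpace ℝ (Fin 2) → ℝ) (x : EuclideanSpace ℝ (Fin 2)) : ℝ :=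
  sInf {t : ℝ | Tendsto (fun r : ℝ =>
      volume (Metric.ball x r ∩ {y | t < u y}) / volume (Metric.ball x r))
    (nhdsWithin 0 (Set.Ioi 0)) (nhds 0)}

local notation "E" => EuclideanSpace ℝ (Fin 2)

/-- The integration-by-parts formula in an arbitrary direction `w`. -/
lemma IsBVScalarOn.parts_dir {Ω : Set E} {u : E → ℝ} {ν : Measure E} {σ : E → E}
    (h : IsBVScalarOn Ω u ν σ) (φ : E → ℝ) (hφ : ContDiff ℝ 1 φ) (hc : HasCompactSupport φ)
    (hs : tsupport φ ⊆ Ω) (w : E) :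
    ∫ x in Ω, u x * fderiv ℝ φ x w = - ∫ x, φ x * ⟪σ x, w⟫ ∂ν := by
  have : IsFiniteMeasure ν := ⟨h.finite⟩
  have hw : w = w 0 • EuclideanSpace.single 0 (1:ℝ) + w 1 • EuclideanSpace.single 1 (1:ℝ) := by
    ext i; fin_cases i <;> simp
  have hin : ∀ x, φ x * ⟪σ x, w⟫ = w 0 * (φ x * σ x 0) + w 1 * (φ x * σ x 1) := by
    intro x
    simp [PiLp.inner_apply, Fin.sum_univ_two]; ring
  have hfd : ∀ x, u x * fderiv ℝ φ x w = w 0 * (u x * fderiv ℝ φ x (EuclideanSpace.single 0 (1:ℝ)))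
      + w 1 * (u x * fderiv ℝ φ x (EuclideanSpace.single 1 (1:ℝ))) := by
    intro x
    conv_lhs => rw [hw]
    rw [map_add, map_smul, map_smul]; simp only [smul_eq_mul]; ring
  have i1 : ∀ l : Fin 2, Integrable (fun x => u x * fderiv ℝ φ x (EuclideanSpace.single l (1:ℝ)))
      (volume.restrict Ω) := by
    intro l
    have hcont : Continuous fun x => fderiv ℝ φ x (EuclideanSpace.single l (1:ℝ)) :=
      (hφ.continuous_fderiv one_ne_zero).clm_apply continuous_const
    obtain ⟨C, hC⟩ :=
      (hc.fderiv_apply (𝕜 := ℝ) (EuclideanSpace.single l (1:ℝ))).exists_bound_of_continuous hcont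
    exact h.integrable.mul_bdd (c := C) hcont.aestronglyMeasurable (ae_of_all _ hC)
  have i2 : ∀ l : Fin 2, Integrable (fun x => φ x * σ x l) ν := by
    intro l
    obtain ⟨C, hC⟩ := hc.exists_bound_of_continuous hφ.continuous
    have hm : Measurable fun x => σ x l := by
      have := h.meas
      fun_prop
    refine Integrable.of_bound (hφ.continuous.measurable.mul hm).aestronglyMeasurable (C * 1) ?_
    filter_upwards [h.unit] with x hx
    rw [norm_mul]
    have h1 : ‖σ x l‖ ≤ 1 := hx ▸ PiLp.norm_apply_le (σ x) l
    exact mul_le_mul (hC x) h1 (norm_nonneg _) ((norm_nonneg _).trans (hC x))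
  simp_rw [hin, hfd]
  rw [integral_add ((i1 0).const_mul _) ((i1 1).const_mul _),
    integral_add ((i2 0).const_mul _) ((i2 1).const_mul _)]
  simp only [integral_const_mul]
  rw [h.parts φ hφ hc hs 0, h.parts φ hφ hc hs 1]
  ring

/-- Mollifications of `u` increase in every direction `w` on which the density `σ` is
nonnegative, as long as the mollifier centred on the segment `[p, p + w]` stays inside `Ω`. -/
lemma mollified_mono {Ω : Set E} {u : E → ℝ} {ν : Measure E} {σ : E → E}
    (h : IsBVScalarOn Ω u ν σ) (ψ : E → ℝ) (hψ : ContDiff ℝ 1 ψ) (hc : HasCompactSupport ψ)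
    (h0 : ∀ z, 0 ≤ ψ z) (p w : E) (hw : ∀ᵐ x ∂ν, 0 ≤ ⟪σ x, w⟫)
    (hs : ∀ s ∈ Set.Icc (0:ℝ) 1, tsupport (fun z => ψ (p + s • w - z)) ⊆ Ω) :
    ∫ z in Ω, u z * ψ (p - z) ≤ ∫ z in Ω, u z * ψ (p + w - z) := by
  have hcont : Continuous fun x => fderiv ℝ ψ x w :=
    (hψ.continuous_fderiv one_ne_zero).clm_apply continuous_const
  obtain ⟨C, hC⟩ := (hc.fderiv_apply (𝕜 := ℝ) w).exists_bound_of_continuous hcont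
  obtain ⟨D, hD⟩ := hc.exists_bound_of_continuous hψ.continuous
  have hint : ∀ s : ℝ, Integrable (fun z => u z * ψ (p + s • w - z)) (volume.restrict Ω) := by
    intro s
    have : Continuous fun z => ψ (p + s • w - z) := hψ.continuous.comp (by fun_prop)
    exact h.integrable.mul_bdd (c := D) this.aestronglyMeasurable (ae_of_all _ fun z => hD _)
  have hder : ∀ s : ℝ, HasDerivAt (fun s : ℝ => ∫ z in Ω, u z * ψ (p + s • w - z))
      (∫ z in Ω, u z * fderiv ℝ ψ (p + s • w - z) w) s := by
    intro s
    refine (hasDerivAt_integral_of_dominated_loc_of_deriv_le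
      (F := fun (s : ℝ) z => u z * ψ (p + s • w - z))
      (F' := fun (s : ℝ) z => u z * fderiv ℝ ψ (p + s • w - z) w)
      (bound := fun z => ‖u z‖ * C) (s := Set.univ)
      Filter.univ_mem (Eventually.of_forall fun s => (hint s).aestronglyMeasurable) (hint s)
      ?_ ?_ ?_ ?_).2
    · have : Continuous fun z => fderiv ℝ ψ (p + s • w - z) w :=
        hcont.comp (f := fun z => p + s • w - z) (by fun_prop)
      exact h.integrable.aestronglyMeasurable.mul this.aestronglyMeasurable
    · refine ae_of_all _ fun z s _ => ?_
      rw [norm_mul]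
      exact mul_le_mul_of_nonneg_left (hC _) (norm_nonneg _)
    · exact h.integrable.norm.mul_const C
    · refine ae_of_all _ fun z s _ => ?_
      have h1 : HasDerivAt (fun s : ℝ => p + s • w - z) w s := by
        simpa using (((hasDerivAt_id s).smul_const w).const_add p).sub_const z
      exact (((hψ.differentiable one_ne_zero _).hasFDerivAt.comp_hasDerivAt s h1)).const_mul (u z)
  have hmono := monotoneOn_of_deriv_nonneg (convex_Icc (0:ℝ) 1)
    (f := fun s : ℝ => ∫ z in Ω, u z * ψ (p + s • w - z))
    (fun s _ => (hder s).continuousAt.continuousWithinAt)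
    (fun s _ => (hder s).differentiableAt.differentiableWithinAt) ?_
  · simpa using hmono (Set.left_mem_Icc.2 zero_le_one) (Set.right_mem_Icc.2 zero_le_one) zero_le_one
  · intro s hs'
    rw [(hder s).deriv]
    have hφ : ContDiff ℝ 1 fun z => ψ (p + s • w - z) := hψ.comp (by fun_prop)
    have hcφ : HasCompactSupport fun z => ψ (p + s • w - z) :=
      hc.comp_homeomorph (Homeomorph.subLeft (p + s • w))
    have key := h.parts_dir _ hφ hcφ (hs s (interior_subset hs')) w
    have hfd : ∀ z, fderiv ℝ (fun z => ψ (p + s • w - z)) z w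
        = - fderiv ℝ ψ (p + s • w - z) w := by
      intro z
      have h1 : HasFDerivAt (fun z : E => p + s • w - z) (-ContinuousLinearMap.id ℝ E) z :=
        (hasFDerivAt_id z).const_sub _
      have := (hψ.differentiable one_ne_zero (p + s • w - z)).hasFDerivAt.comp z h1
      have h2 := this.fderiv
      simp only [Function.comp_def] at h2
      rw [h2]; simp
    simp_rw [hfd, mul_neg, integral_neg, neg_inj] at key
    rw [key]
    refine integral_nonneg_of_ae ?_
    filter_upwards [hw] with x hx
    exact mul_nonneg (h0 _) hx

/-- There is a single full-measure set of points of `Ω` on which `u` is pointwise monotone in all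
directions of the dual cone. -/
lemma exists_ae_monotone {Ω : Set E} (hΩo : IsOpen Ω) (hΩc : Convex ℝ Ω) {v : E} {a : ℝ}
    {u : E → ℝ} {ν : Measure E} {σ : E → E}
    (h : IsBVScalarOn Ω u ν σ) (hcone : ∀ᵐ x ∂ν, σ x ∈ cone v a) :
    ∃ P : E → Prop, (∀ᵐ x, P x) ∧ ∀ p ∈ Ω, ∀ q ∈ Ω, P p → P q →
      (∀ z ∈ cone v a, 0 ≤ ⟪q - p, z⟫) → u p ≤ u q := by
  let φ : ℕ → ContDiffBump (0 : E) := fun n =>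
    ⟨1 / ((n : ℝ) + 1) / 2, 1 / ((n : ℝ) + 1), by positivity, half_lt_self (by positivity)⟩
  have hφ : Tendsto (fun n => (φ n).rOut) atTop (nhds 0) :=
    tendsto_one_div_add_atTop_nhds_zero_nat
  have hφ' : ∀ᶠ n in atTop, (φ n).rOut ≤ 2 * (φ n).rIn :=
    Eventually.of_forall fun n => by simp only [φ]; linarith
  have hg : Integrable (Ω.indicator u) volume :=
    (integrable_indicator_iff hΩo.measurableSet).2 h.integrable
  refine ⟨_, ContDiffBump.ae_convolution_tendsto_right_of_locallyIntegrable hφ hφ'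
    hg.locallyIntegrable, ?_⟩
  intro p hp q hq hPp hPq hpq
  rw [Set.indicator_of_mem hp] at hPp
  rw [Set.indicator_of_mem hq] at hPq
  refine le_of_tendsto_of_tendsto hPp hPq ?_
  obtain ⟨r, hr, hpr⟩ := Metric.nhds_basis_closedBall.mem_iff.1 (hΩo.mem_nhds hp)
  obtain ⟨r', hr', hqr⟩ := Metric.nhds_basis_closedBall.mem_iff.1 (hΩo.mem_nhds hq)
  filter_upwards [hφ.eventually_lt_const (lt_min hr hr')] with n hn
  have conv : ∀ x, convolution ((φ n).normed volume) (Ω.indicator u)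
      (ContinuousLinearMap.lsmul ℝ ℝ) volume x
      = ∫ z in Ω, u z * (φ n).normed volume (x - z) := by
    intro x
    rw [convolution_lsmul_swap, ← integral_indicator hΩo.measurableSet]
    congr 1; ext z
    by_cases hz : z ∈ Ω <;> simp [hz, mul_comm]
  rw [conv, conv]
  have := mollified_mono h ((φ n).normed volume) (φ n).contDiff_normed
    (φ n).hasCompactSupport_normed (φ n).nonneg_normed p (q - p)
    (by filter_upwards [hcone] with x hx; rw [real_inner_comm]; exact hpq _ hx) ?_
  · simpa using this
  · intro s hs
    -- The support is the closed ball around `p + s (q - p)`, which is a convex combination of the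
    -- closed balls of the same radius around `p` and `q`.
    have hsub : tsupport (fun z => (φ n).normed volume (p + s • (q - p) - z))
        ⊆ Metric.closedBall (p + s • (q - p)) (φ n).rOut := by
      refine closure_minimal ?_ Metric.isClosed_closedBall
      intro z hz
      have : p + s • (q - p) - z ∈ Function.support ((φ n).normed volume) := hz
      rw [(φ n).support_normed_eq, mem_ball_zero_iff] at this
      rw [Metric.mem_closedBall, dist_comm, dist_eq_norm]
      exact this.le
    refine hsub.trans fun z hz => ?_
    rw [Metric.mem_closedBall, dist_eq_norm] at hz
    have h1 : z - s • (q - p) ∈ Ω := hpr <| by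
      rw [Metric.mem_closedBall, dist_eq_norm,
        show z - s • (q - p) - p = z - (p + s • (q - p)) by abel]
      exact hz.trans (hn.le.trans (min_le_left _ _))
    have h2 : z - s • (q - p) + (q - p) ∈ Ω := hqr <| by
      rw [Metric.mem_closedBall, dist_eq_norm,
        show z - s • (q - p) + (q - p) - q = z - (p + s • (q - p)) by abel]
      exact hz.trans (hn.le.trans (min_le_right _ _))
    have := hΩc.add_smul_sub_mem h1 h2 hs
    simpa using this

/-- The dual cone contains the ball of radius `c * a` around `c • v`. -/
lemma dual_of_near {v : E} {a c : ℝ} (hc : 0 ≤ c) (w : E)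
    (hw : ‖w - c • v‖ ≤ c * a) : ∀ z ∈ cone v a, 0 ≤ ⟪w, z⟫ := by
  intro z hz
  have hz' : a * ‖z‖ ≤ ⟪z, v⟫ := hz
  have h1 : ⟪w, z⟫ = ⟪w - c • v, z⟫ + c * ⟪z, v⟫ := by
    rw [inner_sub_left, real_inner_smul_left, real_inner_comm z v]; ring
  have h2 : -(c * a * ‖z‖) ≤ ⟪w - c • v, z⟫ := by
    have := abs_le.1 (abs_real_inner_le_norm (w - c • v) z)
    have h3 := mul_le_mul_of_nonneg_right hw (norm_nonneg z)
    linarith [this.1]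
  nlinarith [mul_le_mul_of_nonneg_left hz' hc]

lemma exists_good {P : E → Prop} (hP : ∀ᵐ x, P x) (c : E) {r : ℝ} (hr : 0 < r) :
    ∃ q ∈ Metric.ball c r, P q := by
  obtain ⟨q, hq, hq'⟩ := (Measure.dense_of_ae hP).exists_mem_open Metric.isOpen_ball
    ⟨c, Metric.mem_ball_self hr⟩
  exact ⟨q, hq', hq⟩

/-- A function monotone along the dual cone on a full-measure set is essentially bounded near
each point of `Ω`. -/
lemma ae_bounded_near {Ω : Set E} (hΩo : IsOpen Ω) {v : E} (hv : ‖v‖ = 1) {a : ℝ} (ha : 0 < a)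
    (ha' : a ≤ 1) {u : E → ℝ} {P : E → Prop} (hP : ∀ᵐ x, P x)
    (hmono : ∀ p ∈ Ω, ∀ q ∈ Ω, P p → P q → (∀ z ∈ cone v a, 0 ≤ ⟪q - p, z⟫) → u p ≤ u q)
    {x : E} (hx : x ∈ Ω) :
    ∃ δ > 0, ∃ m M : ℝ, ∀ p ∈ Metric.ball x δ, P p → m ≤ u p ∧ u p ≤ M := by
  obtain ⟨ρ, hρ, hball⟩ := Metric.isOpen_iff.1 hΩo x hx
  set c := ρ / 2 with hc
  have hc0 : 0 < c := by positivity
  have hca : 0 < c * a / 2 := by positivity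
  have hca' : c * a ≤ c := by nlinarith
  have hcv : ‖c • v‖ = c := by rw [norm_smul, hv, Real.norm_of_nonneg hc0.le, mul_one]
  obtain ⟨q, hq, hPq⟩ := exists_good hP (x + c • v) hca
  obtain ⟨q', hq', hPq'⟩ := exists_good hP (x - c • v) hca
  rw [mem_ball_iff_norm] at hq hq'
  have hqΩ : q ∈ Ω := hball <| by
    rw [mem_ball_iff_norm, show q - x = (q - (x + c • v)) + c • v by abel]
    refine (norm_add_le _ _).trans_lt ?_
    linarith
  have hqΩ' : q' ∈ Ω := hball <| by
    rw [mem_ball_iff_norm, show q' - x = (q' - (x - c • v)) - c • v by abel]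
    refine (norm_sub_le _ _).trans_lt ?_
    linarith
  refine ⟨c * a / 2, hca, u q', u q, fun p hp hPp => ?_⟩
  rw [mem_ball_iff_norm] at hp
  have hpΩ : p ∈ Ω := hball <| by
    rw [mem_ball_iff_norm]; linarith
  constructor
  · refine hmono q' hqΩ' p hpΩ hPq' hPp (dual_of_near hc0.le _ ?_)
    rw [show p - q' - c • v = (p - x) - (q' - (x - c • v)) by abel]
    refine (norm_sub_le _ _).trans ?_
    linarith
  · refine hmono p hpΩ q hqΩ hPp hPq (dual_of_near hc0.le _ ?_)
    rw [show q - p - c • v = (q - (x + c • v)) - (p - x) by abel]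
    refine (norm_sub_le _ _).trans ?_
    linarith

/-- The monotonicity estimate (3.11)–(3.12) in the proof of Theorem 3.8: if
`f′ ∈ BV(Ω)` on an open convex `Ω ⊂ ℝ²` has `dDf′/d|Df′| ∈ C(v,a)` `|Df′|`-a.e., and
`f(y) := f′(y) + v·y`, then for all `x, y ∈ Ω` with `(y−x)·z > 0` for every nonzero
`z ∈ C(v,a)`, the precise representatives satisfy `f*(y) − f*(x) ≥ v·(y−x) > 0`. -/
theorem monotone_direction_estimate (Ω : Set (EuclideanSpace ℝ (Fin 2)))
    (hΩopen : IsOpen Ω) (hΩconv : Convex ℝ Ω)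
    (v : EuclideanSpace ℝ (Fin 2)) (hv : ‖v‖ = 1) (a : ℝ) (ha : 0 < a) (ha' : a ≤ 1)
    (f' : EuclideanSpace ℝ (Fin 2) → ℝ)
    (ν : Measure (EuclideanSpace ℝ (Fin 2)))
    (σ : EuclideanSpace ℝ (Fin 2) → EuclideanSpace ℝ (Fin 2))
    (hBV : IsBVScalarOn Ω f' ν σ)
    (hcone : ∀ᵐ x ∂ν, σ x ∈ cone v a)
    (f : EuclideanSpace ℝ (Fin 2) → ℝ) (hf : ∀ y, f y = f' y + ⟪v, y⟫) :
    ∀ x ∈ Ω, ∀ y ∈ Ω, (∀ z ∈ cone v a, z ≠ 0 → 0 < ⟪y - x, z⟫) →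
      0 < ⟪v, y - x⟫ ∧ ⟪v, y - x⟫ ≤ preciseRep f y - preciseRep f x := by
  intro x hx y hy hxy
  have hvc : v ∈ cone v a := by
    change a * ‖v‖ ≤ ⟪v, v⟫
    rw [real_inner_self_eq_norm_sq, hv]; linarith
  have hv0 : v ≠ 0 := by
    rintro rfl; simp at hv
  refine ⟨by rw [real_inner_comm]; exact hxy v hvc hv0, ?_⟩
  obtain ⟨P, hP, hmono⟩ := exists_ae_monotone hΩopen hΩconv hBV hcone
  set w := y - x with hw
  have hwdual : ∀ z ∈ cone v a, 0 ≤ ⟪w, z⟫ := by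
    intro z hz
    rcases eq_or_ne z 0 with rfl | h0
    · simp
    · exact (hxy z hz h0).le
  have hlin : ∀ z p : EuclideanSpace ℝ (Fin 2), p ∈ Metric.ball z 1 → |⟪v, p⟫ - ⟪v, z⟫| ≤ 1 := by
    intro z p hp
    rw [mem_ball_iff_norm] at hp
    rw [← inner_sub_right]
    refine (abs_real_inner_le_norm _ _).trans ?_
    rw [hv, one_mul]; exact hp.le
  -- The thresholds at `y` form a nonempty set, as `f` is essentially bounded above near `y`.
  have hne : {t : ℝ | Tendsto (fun r : ℝ =>
      volume (Metric.ball y r ∩ {z | t < f z}) / volume (Metric.ball y r))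
      (nhdsWithin 0 (Set.Ioi 0)) (nhds 0)}.Nonempty := by
    obtain ⟨δ, hδ, m, M, hb⟩ := ae_bounded_near hΩopen hv ha ha' hP hmono hy
    refine ⟨M + (⟪v, y⟫ + 1), ?_⟩
    refine tendsto_const_nhds.congr' ?_
    filter_upwards [Ioo_mem_nhdsGT (lt_min hδ one_pos)] with r hr
    have : volume (Metric.ball y r ∩ {z | M + (⟪v, y⟫ + 1) < f z}) = 0 := by
      refine measure_mono_null ?_ (ae_iff.1 hP)
      rintro p ⟨hp, hp'⟩ hPp
      have h1 := (hb p (Metric.ball_subset_ball (hr.2.le.trans (min_le_left _ _)) hp) hPp).2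
      have h2 := abs_le.1 (hlin y p (Metric.ball_subset_ball (hr.2.le.trans (min_le_right _ _)) hp))
      simp only [Set.mem_ofPred_eq, hf] at hp'
      linarith [h2.2]
    rw [this, ENNReal.zero_div]
  -- The thresholds at `x` are bounded below: below an essential lower bound the ratio is `1`.
  have hbdd : BddBelow {t : ℝ | Tendsto (fun r : ℝ =>
      volume (Metric.ball x r ∩ {z | t < f z}) / volume (Metric.ball x r))
      (nhdsWithin 0 (Set.Ioi 0)) (nhds 0)} := by
    obtain ⟨δ, hδ, m, M, hb⟩ := ae_bounded_near hΩopen hv ha ha' hP hmono hx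
    refine ⟨m + (⟪v, x⟫ - 1), fun t ht => ?_⟩
    by_contra! hlt
    have h1 : Tendsto (fun r : ℝ =>
        volume (Metric.ball x r ∩ {z | t < f z}) / volume (Metric.ball x r))
        (nhdsWithin 0 (Set.Ioi 0)) (nhds 1) := by
      refine tendsto_const_nhds.congr' ?_
      filter_upwards [Ioo_mem_nhdsGT (lt_min hδ one_pos)] with r hr
      have : volume (Metric.ball x r ∩ {z | t < f z}) = volume (Metric.ball x r) := by
        refine measure_congr ?_
        filter_upwards [hP] with p hPp
        refine propext ⟨fun h => h.1, fun hp => ⟨hp, ?_⟩⟩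
        have h1 := (hb p (Metric.ball_subset_ball (hr.2.le.trans (min_le_left _ _)) hp) hPp).1
        have h2 := abs_le.1
          (hlin x p (Metric.ball_subset_ball (hr.2.le.trans (min_le_right _ _)) hp))
        simp only [Set.mem_ofPred_eq, hf]
        linarith [h2.1]
      rw [this, ENNReal.div_self (Metric.measure_ball_pos _ _ hr.1).ne' measure_ball_lt_top.ne]
    exact one_ne_zero (tendsto_nhds_unique h1 ht)
  rw [le_sub_iff_add_le']
  refine le_csInf hne fun t ht => ?_
  rw [← le_sub_iff_add_le]
  refine csInf_le hbdd ?_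
  obtain ⟨r₁, hr₁, hb₁⟩ := Metric.isOpen_iff.1 hΩopen x hx
  obtain ⟨r₂, hr₂, hb₂⟩ := Metric.isOpen_iff.1 hΩopen y hy
  refine tendsto_of_tendsto_of_tendsto_of_le_of_le' tendsto_const_nhds ht
    (Eventually.of_forall fun _ => zero_le) ?_
  filter_upwards [Ioo_mem_nhdsGT (lt_min hr₁ hr₂)] with r hr
  have hvol : volume (Metric.ball x r) = volume (Metric.ball y r) := by
    rw [Measure.addHaar_ball_center, Measure.addHaar_ball_center volume y]
  rw [hvol]
  refine ENNReal.div_le_div_right ?_ _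
  rw [← measure_preimage_add_right volume w (Metric.ball y r ∩ {z | t < f z})]
  refine measure_mono_ae ?_
  have hP' : ∀ᵐ p, P (p + w) :=
    (measurePreserving_add_right volume w).quasiMeasurePreserving.ae hP
  filter_upwards [hP, hP'] with p hPp hPp'
  rintro ⟨hp, hp'⟩
  have hpy : p + w ∈ Metric.ball y r := by
    rw [mem_ball_iff_norm] at hp ⊢
    rwa [hw, show p + (y - x) - y = p - x by abel]
  refine ⟨hpy, ?_⟩
  have hle := hmono p (hb₁ (Metric.ball_subset_ball (hr.2.le.trans (min_le_left _ _)) hp)) (p + w)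
    (hb₂ (Metric.ball_subset_ball (hr.2.le.trans (min_le_right _ _)) hpy)) hPp hPp'
    (by rwa [add_sub_cancel_left])
  simp only [Set.mem_ofPred_eq, hf, inner_add_right] at hp' ⊢
  linarith
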